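/- Let w = (w₁,w₂,w₃,w₄) be a unit vector in ℝ⁴. There exist 2×2 real orthogonal matrices U and V with (U ⊗ V) e₀₀ = w, where e₀₀ = (1,0,0,0), if and only if w₁w₄ = w₂w₃. (The orbit of the state |00⟩ under real local gates consists exactly of the unentangled unit states, those whose amplitude matrix has determinant zero.) -/

import Mathlib

/-!
Arrange `w` as the `2 × 2` amplitude matrix `M`. A local gate `U ⊗ V` acts by `M ↦ U M Vᵀ`, so it
sends `e₀₀`, whose amplitude matrix is `e₀ e₀ᵀ`, to the outer product of the first columns of `U`
and `V`, which is singular. Conversely, a singular `2 × 2` matrix of Frobenius norm one is an outer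
product of unit vectors, and every unit vector is the first column of an orthogonal matrix.
-/

open Matrix Real

/-- Kronecker product of two `2 × 2` real matrices, as a `4 × 4` real matrix
acting on amplitude vectors `(w₁,w₂,w₃,w₄)` of two-qubit states. -/
noncomputable def kron (A B : Matrix (Fin 2) (Fin 2) ℝ) : Matrix (Fin 4) (Fin 4) ℝ :=
  Matrix.of fun i j =>
    A ⟨i.val / 2, by omega⟩ ⟨j.val / 2, by omega⟩ *
    B ⟨i.val % 2, by omega⟩ ⟨j.val % 2, by omega⟩

/-- The single-qubit rotation gate `R_y(θ)`. -/
noncomputable def Ry (θ : ℝ) : Matrix (Fin 2) (Fin 2) ℝ :=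
  !![Real.cos (θ / 2), -Real.sin (θ / 2); Real.sin (θ / 2), Real.cos (θ / 2)]

open scoped Kronecker

section RankOne

variable {K m n : Type*}

theorem rank_lt_card_of_det_eq_zero [Field K] [Fintype n] [DecidableEq n] {M : Matrix n n K}
    (hM : M.det = 0) : M.rank < Fintype.card n := by
  by_contra! hrank
  rw [rank_eq_finrank_span_cols] at hrank
  have hcols := linearIndependent_iff_card_le_finrank_span.mpr hrank
  have hunit := (isUnit_iff_isUnit_det M).mp (linearIndependent_cols_iff_isUnit.mp hcols)
  exact hunit.ne_zero hM

theorem exists_eq_vecMulVec_of_rank_le_one [Field K] [Finite m] [Fintype n] {M : Matrix m n K}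
    (hM : M.rank ≤ 1) : ∃ (a : m → K) (b : n → K), M = vecMulVec a b := by
  rw [rank_eq_finrank_span_cols, Submodule.finrank_le_one_iff_isPrincipal] at hM
  obtain ⟨a, ha⟩ := hM.principal
  have hcol (j : n) : ∃ c : K, c • a = M.col j := by
    rw [← Submodule.mem_span_singleton, ← ha]
    exact Submodule.subset_span ⟨j, rfl⟩
  choose b hb using hcol
  refine ⟨a, b, ext_col fun j ↦ ?_⟩
  rw [← hb, col_vecMulVec, op_smul_eq_smul]

theorem trace_transpose_mul_self_vecMulVec [CommSemiring K] [Fintype m] [Fintype n]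
    (a : m → K) (b : n → K) :
    ((vecMulVec a b)ᵀ * vecMulVec a b).trace = (a ⬝ᵥ a) * (b ⬝ᵥ b) := by
  rw [transpose_vecMulVec, vecMulVec_mul_vecMulVec, trace_vecMulVec, dotProduct_smul, smul_eq_mul]

theorem exists_unit_eq_vecMulVec_of_rank_le_one [Fintype m] [Fintype n] {M : Matrix m n ℝ}
    (hrank : M.rank ≤ 1) (hnorm : (Mᵀ * M).trace = 1) :
    ∃ (a : m → ℝ) (b : n → ℝ), a ⬝ᵥ a = 1 ∧ b ⬝ᵥ b = 1 ∧ M = vecMulVec a b := by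
  obtain ⟨a, b, rfl⟩ := exists_eq_vecMulVec_of_rank_le_one hrank
  rw [trace_transpose_mul_self_vecMulVec] at hnorm
  set r := √(b ⬝ᵥ b)
  have hr_sq : r * r = b ⬝ᵥ b :=
    Real.mul_self_sqrt (Finset.sum_nonneg fun j _ ↦ mul_self_nonneg (b j))
  have hr : r ≠ 0 := by
    intro h
    simp [← hr_sq, h] at hnorm
  refine ⟨r • a, r⁻¹ • b, ?_, ?_, ?_⟩
  · rw [smul_dotProduct, dotProduct_smul, smul_smul, hr_sq, smul_eq_mul, mul_comm, hnorm]
  · rw [smul_dotProduct, dotProduct_smul, smul_smul, ← hr_sq, smul_eq_mul]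
    field_simp
  · rw [smul_vecMulVec, vecMulVec_smul, smul_inv_smul₀ hr]

end RankOne

theorem exists_orthogonal_col_eq {n : Type*} [Fintype n] [DecidableEq n] (i : n) {v : n → ℝ}
    (hv : v ⬝ᵥ v = 1) : ∃ U : Matrix n n ℝ, Uᵀ * U = 1 ∧ U.col i = v := by
  have hnorm : ‖WithLp.toLp 2 v‖ = 1 := by
    rw [EuclideanSpace.norm_eq, Real.sqrt_eq_one, ← hv]
    simp [dotProduct, sq]
  have horth : Orthonormal ℝ (({i} : Set n).domRestrict fun _ ↦ WithLp.toLp 2 v) :=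
    ⟨fun _ ↦ hnorm, fun j k hjk ↦ (hjk (Subsingleton.elim j k)).elim⟩
  obtain ⟨b, hb⟩ := horth.exists_orthonormalBasis_extension_of_card_eq finrank_euclideanSpace
  refine ⟨(EuclideanSpace.basisFun n ℝ).toBasis.toMatrix b, ?_, ?_⟩
  · exact (EuclideanSpace.basisFun n ℝ).toMatrix_orthonormalBasis_conjTranspose_mul_self b
  · ext j
    simp [Module.Basis.toMatrix_apply, hb i rfl]

/-- The coefficient matrix of a two-qubit state: rows are indexed by the first qubit and columns by
the second, so that product states correspond to outer products. -/
def amplitudeMatrix {R : Type*} (w : Fin 4 → R) : Matrix (Fin 2) (Fin 2) R :=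
  !![w 0, w 1; w 2, w 3]

theorem vec_transpose_amplitudeMatrix {R : Type*} (w : Fin 4 → R) :
    vec (amplitudeMatrix w)ᵀ = w ∘ finProdFinEquiv := by
  ext ⟨i, j⟩
  fin_cases i <;> fin_cases j <;> rfl

theorem amplitudeMatrix_injective {R : Type*} :
    Function.Injective (amplitudeMatrix : (Fin 4 → R) → Matrix (Fin 2) (Fin 2) R) := by
  intro w z h
  ext i
  fin_cases i
  exacts [congr_fun₂ h 0 0, congr_fun₂ h 0 1, congr_fun₂ h 1 0, congr_fun₂ h 1 1]

theorem det_amplitudeMatrix {R : Type*} [CommRing R] (w : Fin 4 → R) :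
    (amplitudeMatrix w).det = w 0 * w 3 - w 1 * w 2 :=
  det_fin_two_of ..

theorem trace_transpose_mul_self_amplitudeMatrix {R : Type*} [CommSemiring R] (w : Fin 4 → R) :
    ((amplitudeMatrix w)ᵀ * amplitudeMatrix w).trace =
      w 0 ^ 2 + w 1 ^ 2 + w 2 ^ 2 + w 3 ^ 2 := by
  simp only [amplitudeMatrix, trace_fin_two, mul_apply, transpose_apply, Fin.sum_univ_two, of_apply,
    cons_val', cons_val_zero, cons_val_one, cons_val_fin_one]
  ring

theorem kron_eq_reindex_kronecker (U V : Matrix (Fin 2) (Fin 2) ℝ) :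
    kron U V = reindex finProdFinEquiv finProdFinEquiv (U ⊗ₖ V) :=
  rfl

theorem kron_mulVec_comp_finProdFinEquiv (U V : Matrix (Fin 2) (Fin 2) ℝ) (w : Fin 4 → ℝ) :
    (kron U V *ᵥ w) ∘ finProdFinEquiv = (U ⊗ₖ V) *ᵥ (w ∘ finProdFinEquiv) := by
  rw [kron_eq_reindex_kronecker, reindex_apply, submatrix_mulVec_equiv, Function.comp_assoc,
    Equiv.symm_symm, Equiv.symm_comp_self, Function.comp_id]

theorem amplitudeMatrix_kron_mulVec (U V : Matrix (Fin 2) (Fin 2) ℝ) (w : Fin 4 → ℝ) :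
    amplitudeMatrix (kron U V *ᵥ w) = U * amplitudeMatrix w * Vᵀ := by
  apply transpose_injective
  rw [← vec_inj, vec_transpose_amplitudeMatrix, kron_mulVec_comp_finProdFinEquiv,
    ← vec_transpose_amplitudeMatrix, kronecker_mulVec_vec, transpose_mul, transpose_mul,
    transpose_transpose, Matrix.mul_assoc]

theorem amplitudeMatrix_e00 {R : Type*} [MulZeroOneClass R] :
    amplitudeMatrix (![1, 0, 0, 0] : Fin 4 → R) = vecMulVec (Pi.single 0 1) (Pi.single 0 1) := by
  ext i j
  fin_cases i <;> fin_cases j <;> simp [amplitudeMatrix, vecMulVec_apply]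

theorem amplitudeMatrix_kron_mulVec_e00 (U V : Matrix (Fin 2) (Fin 2) ℝ) :
    amplitudeMatrix (kron U V *ᵥ ![1, 0, 0, 0]) = vecMulVec (U.col 0) (V.col 0) := by
  rw [amplitudeMatrix_kron_mulVec, amplitudeMatrix_e00, mul_vecMulVec, vecMulVec_mul,
    vecMul_transpose, mulVec_single_one, mulVec_single_one]

theorem stmt_4 (w : Fin 4 → ℝ)
    (hw : w 0 ^ 2 + w 1 ^ 2 + w 2 ^ 2 + w 3 ^ 2 = 1) :
    (∃ U V : Matrix (Fin 2) (Fin 2) ℝ, Uᵀ * U = 1 ∧ Vᵀ * V = 1 ∧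
        (kron U V).mulVec ![1, 0, 0, 0] = w) ↔
      w 0 * w 3 = w 1 * w 2 := by
  rw [← sub_eq_zero, ← det_amplitudeMatrix]
  constructor
  · rintro ⟨U, V, -, -, rfl⟩
    rw [amplitudeMatrix_kron_mulVec_e00, det_vecMulVec]
  · intro hdet
    have hrank : (amplitudeMatrix w).rank ≤ 1 :=
      Nat.le_of_lt_succ (rank_lt_card_of_det_eq_zero hdet)
    have hnorm := (trace_transpose_mul_self_amplitudeMatrix w).trans hw
    obtain ⟨a, b, ha, hb, hab⟩ := exists_unit_eq_vecMulVec_of_rank_le_one hrank hnorm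
    obtain ⟨U, hU, rfl⟩ := exists_orthogonal_col_eq 0 ha
    obtain ⟨V, hV, rfl⟩ := exists_orthogonal_col_eq 0 hb
    exact ⟨U, V, hU, hV,
      amplitudeMatrix_injective ((amplitudeMatrix_kron_mulVec_e00 U V).trans hab.symm)⟩
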